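/- arXiv:1510.05765 — 2 statements merged into one kernel-verified Lean document; each statement's English description precedes it below -/
import Mathlib

section
/- The set of lonesum 0-1 matrices of size n×k and the set of Γ-free 0-1 matrices of size n×k have the same cardinality. -/
/-!
Lonesum matrices are those whose rows are pairwise comparable: two incomparable rows contain a
`2 × 2` permutation submatrix that can be flipped, while for pairwise comparable rows there are
thresholds `t j` with `M i j = 1 ↔ t j ≤ rowSum M i`, and then `M` is the only maximizer of the
functional `N ↦ ∑ i j, N i j * (2 * rowSum M i + 1 - 2 * t j)`, which depends only on the row and
column sums of `N` (`lonesum_iff_chainMat`).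

The set of chain matrices and the set of Γ-free matrices, with rows indexed by a finite linear
order `α`, satisfy the same recursion in the number `k` of columns.

* Removing the first column `J` of a Γ-free matrix leaves a Γ-free matrix whose rows in `J`, except
  for the last one, vanish; there is no other constraint (`gammaSplit`). Deleting those zero rows
  gives an arbitrary Γ-free matrix on the remaining rows (`gammaDrop`).
* If `A` is the first column of a chain matrix and `M` the rest, let `J` be the set of those rows in
  `A` whose restriction to `M` is least. Then `M` is constant on `J`, and `A` is recovered as `J`
  together with all rows of `M` strictly above it (`chainSplit`). Deleting all the equal rows in
  `J` but the last one gives an arbitrary chain matrix on the remaining rows (`chainDrop`).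

In both cases the set `J` is arbitrary and the remaining rows are the same, so induction on `k`
yields a bijection.
-/

/-- The row sum of row `i`: the number of columns `j` with `M i j = true`. -/
def rowSum {n k : ℕ} (M : Fin n → Fin k → Bool) (i : Fin n) : ℕ :=
  (Finset.univ.filter fun j : Fin k => M i j = true).card

/-- The column sum of column `j`: the number of rows `i` with `M i j = true`. -/
def colSum {n k : ℕ} (M : Fin n → Fin k → Bool) (j : Fin k) : ℕ :=
  (Finset.univ.filter fun i : Fin n => M i j = true).card

/-- A 0-1 matrix is lonesum iff it is uniquely determined by its row and column sums. -/
def Lonesum {n k : ℕ} (M : Fin n → Fin k → Bool) : Prop :=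
  ∀ N : Fin n → Fin k → Bool,
    (∀ i, rowSum N i = rowSum M i) → (∀ j, colSum N j = colSum M j) → N = M

/-- A 0-1 matrix `M` contains a Γ configuration iff there are rows `i < i'` and
columns `j < j'` with `M i j = true`, `M i j' = true` and `M i' j = true`.
`M` is Γ-free iff it contains no Γ configuration. -/
def GammaFree {n k : ℕ} (M : Fin n → Fin k → Bool) : Prop :=
  ¬ ∃ (i i' : Fin n) (j j' : Fin k),
      i < i' ∧ j < j' ∧ M i j = true ∧ M i j' = true ∧ M i' j = true

/-- The rows of `M`, as elements of the product order `Fin k → Bool`, are pairwise comparable. -/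
def ChainMat {α : Type} {k : ℕ} (M : α → Fin k → Bool) : Prop :=
  ∀ i i', M i ≤ M i' ∨ M i' ≤ M i

/-- Γ-freeness for matrices with rows indexed by an arbitrary linear order. -/
def GFree {α : Type} [LinearOrder α] {k : ℕ} (M : α → Fin k → Bool) : Prop :=
  ∀ i i' j j', i < i' → j < j' → M i j = true → M i j' = true → M i' j = true → False

/-- `M` is constant on the set of rows `J`. -/
def ConstOn {α : Type} {k : ℕ} (J : α → Bool) (M : α → Fin k → Bool) : Prop :=
  ∀ i i', J i = true → J i' = true → M i = M i'

/-- `i` is a row in `J` other than the last one. -/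
def NonLast {α : Type} [LinearOrder α] (J : α → Bool) (i : α) : Prop :=
  J i = true ∧ ∃ i', J i' = true ∧ i < i'

/-! ### Lonesum matrices are the chain matrices -/

lemma rowSum_eq_sum {n k : ℕ} (M : Fin n → Fin k → Bool) (i : Fin n) :
    (rowSum M i : ℤ) = ∑ j, if M i j = true then (1 : ℤ) else 0 := by
  simp [rowSum]

lemma colSum_eq_sum {n k : ℕ} (M : Fin n → Fin k → Bool) (j : Fin k) :
    (colSum M j : ℤ) = ∑ i, if M i j = true then (1 : ℤ) else 0 := by
  simp [colSum]

lemma ChainMat.exists_threshold {n k : ℕ} {M : Fin n → Fin k → Bool} (h : ChainMat M) :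
    ∃ t : Fin k → ℕ, ∀ i j, M i j = true ↔ t j ≤ rowSum M i := by
  have key : ∀ j, ∃ t : ℕ, ∀ i, M i j = true ↔ t ≤ rowSum M i := by
    intro j
    by_cases hj : ∃ i, M i j = true
    · obtain ⟨i₁, hi₁⟩ := hj
      obtain ⟨i₀, hi₀, hmin⟩ := Finset.exists_min_image
        (Finset.univ.filter fun i => M i j = true) (rowSum M) ⟨i₁, by simp [hi₁]⟩
      simp only [Finset.mem_filter, Finset.mem_univ, true_and] at hi₀ hmin
      refine ⟨rowSum M i₀, fun i => ⟨hmin i, fun hle => ?_⟩⟩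
      rcases h i₀ i with h' | h'
      · have := h' j
        rw [hi₀] at this
        exact this rfl
      · by_contra hij
        have : rowSum M i < rowSum M i₀ := by
          apply Finset.card_lt_card
          rw [Finset.ssubset_iff_of_subset]
          · exact ⟨j, by simp [hi₀], by simp [hij]⟩
          · intro x hx
            simp only [Finset.mem_filter, Finset.mem_univ, true_and] at hx ⊢
            exact h' x hx
        omega
    · push Not at hj
      -- no row meets column `j`, so any number above all row sums is a threshold
      refine ⟨k + 1, fun i => ⟨fun hi => absurd hi (by simpa using hj i), fun hle => ?_⟩⟩
      have : rowSum M i ≤ k := (Finset.card_le_univ _).trans (by simp)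
      omega
  choose t ht using key
  exact ⟨t, fun i j => ht j i⟩

lemma ChainMat.lonesum {n k : ℕ} {M : Fin n → Fin k → Bool} (h : ChainMat M) : Lonesum M := by
  intro N hr hc
  obtain ⟨t, ht⟩ := h.exists_threshold
  let b : Bool → ℤ := fun x => if x = true then 1 else 0
  let w : Fin n → Fin k → ℤ := fun i j => 2 * rowSum M i + 1 - 2 * t j
  have hnn : ∀ i j, 0 ≤ (b (M i j) - b (N i j)) * w i j := by
    intro i j
    have := ht i j
    cases hM : M i j <;> cases hN : N i j <;> simp [b, w, hM] at this ⊢ <;> omega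
  have hR : ∀ i, ∑ j, (b (M i j) - b (N i j)) = 0 := by
    intro i
    rw [Finset.sum_sub_distrib, ← rowSum_eq_sum, ← rowSum_eq_sum, hr, sub_self]
  have hC : ∀ j, ∑ i, (b (M i j) - b (N i j)) = 0 := by
    intro j
    rw [Finset.sum_sub_distrib, ← colSum_eq_sum, ← colSum_eq_sum, hc, sub_self]
  have h0 : ∑ i, ∑ j, (b (M i j) - b (N i j)) * w i j = 0 := by
    have e : ∀ i j, (b (M i j) - b (N i j)) * w i j =
        (b (M i j) - b (N i j)) * (2 * rowSum M i + 1) -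
          (b (M i j) - b (N i j)) * (2 * t j) := fun i j => by simp only [w]; ring
    simp only [e, Finset.sum_sub_distrib (fun j => _) (fun j => _)]
    rw [Finset.sum_comm (f := fun i j => (b (M i j) - b (N i j)) * (2 * (t j : ℤ)))]
    simp only [← Finset.sum_mul, hR, hC]
    simp
  funext i j
  have h1 := (Finset.sum_eq_zero_iff_of_nonneg
    (fun i _ => Finset.sum_nonneg fun j _ => hnn i j)).1 h0 i (Finset.mem_univ _)
  have h2 := (Finset.sum_eq_zero_iff_of_nonneg (fun j _ => hnn i j)).1 h1 j (Finset.mem_univ _)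
  rcases mul_eq_zero.1 h2 with h3 | h3
  · revert h3
    cases M i j <;> cases N i j <;> simp [b]
  · -- the weights are odd
    simp only [w] at h3
    omega

lemma Lonesum.chainMat {n k : ℕ} {M : Fin n → Fin k → Bool} (h : Lonesum M) : ChainMat M := by
  intro i i'
  by_contra hcon
  simp only [not_or, Pi.le_def, not_forall] at hcon
  obtain ⟨⟨j, hj⟩, ⟨j', hj'⟩⟩ := hcon
  have a1 : M i j = true ∧ M i' j = false := by
    revert hj; cases M i j <;> cases M i' j <;> simp
  have a2 : M i' j' = true ∧ M i j' = false := by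
    revert hj'; cases M i j' <;> cases M i' j' <;> simp
  have hii : i ≠ i' := by rintro rfl; simp_all
  have hjj : j ≠ j' := by rintro rfl; simp_all
  -- permuting columns within rows `i, i'` and rows within columns `j, j'` gives the same matrix,
  -- namely `M` with the `2 × 2` permutation submatrix flipped
  let N : Fin n → Fin k → Bool := fun x y =>
    if x = i ∨ x = i' then M x (Equiv.swap j j' y) else M x y
  have hN : ∀ x y, N x y = if y = j ∨ y = j' then M (Equiv.swap i i' x) y else M x y := by
    intro x y
    simp only [N, Equiv.swap_apply_def]
    grind
  have hr : ∀ x, rowSum N x = rowSum M x := by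
    intro x
    by_cases hx : x = i ∨ x = i'
    · apply Finset.card_equiv (Equiv.swap j j')
      intro y
      simp [N, hx]
    · simp [rowSum, N, hx]
  have hc : ∀ y, colSum N y = colSum M y := by
    intro y
    by_cases hy : y = j ∨ y = j'
    · apply Finset.card_equiv (Equiv.swap i i')
      intro x
      simp [hN, hy]
    · simp [colSum, hN, hy]
  have := congrFun (congrFun (h N hr hc) i) j
  simp [N, a1, a2] at this

lemma lonesum_iff_chainMat {n k : ℕ} (M : Fin n → Fin k → Bool) : Lonesum M ↔ ChainMat M :=
  ⟨Lonesum.chainMat, ChainMat.lonesum⟩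

/-! ### Splitting off the first column -/

lemma cons_le_cons_bool {k : ℕ} (a b : Bool) (v w : Fin k → Bool) :
    (Fin.cons a v : Fin (k + 1) → Bool) ≤ Fin.cons b w ↔ (a = true → b = true) ∧ v ≤ w := by
  simp [Pi.le_def, Fin.forall_fin_succ, Bool.le_iff_imp]

/-- A matrix with `k + 1` columns is its first column together with the remaining `k` columns. -/
def consCol (α : Type) (k : ℕ) :
    (α → Bool) × (α → Fin k → Bool) ≃ (α → Fin (k + 1) → Bool) where
  toFun p i := Fin.cons (p.1 i) (p.2 i)
  invFun M := (fun i => M i 0, fun i => Fin.tail (M i))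
  left_inv p := by simp
  right_inv M := by simp

open Classical in
/-- The rows of `A` whose restriction to `M` is least. -/
noncomputable def lowSet {α : Type} {k : ℕ} (M : α → Fin k → Bool) (A : α → Bool) : α → Bool :=
  fun i => decide (A i = true ∧ ∀ i', A i' = true → M i ≤ M i')

open Classical in
/-- The rows of `J` together with all rows of `M` strictly above some row in `J`. -/
noncomputable def upSet {α : Type} {k : ℕ} (M : α → Fin k → Bool) (J : α → Bool) : α → Bool :=
  fun i => decide (J i = true ∨ ∃ i', J i' = true ∧ M i' < M i)

lemma lowSet_iff {α : Type} {k : ℕ} (M : α → Fin k → Bool) (A : α → Bool) (i : α) :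
    lowSet M A i = true ↔ A i = true ∧ ∀ i', A i' = true → M i ≤ M i' := by
  simp [lowSet]

lemma upSet_iff {α : Type} {k : ℕ} (M : α → Fin k → Bool) (J : α → Bool) (i : α) :
    upSet M J i = true ↔ J i = true ∨ ∃ i', J i' = true ∧ M i' < M i := by
  simp [upSet]

lemma chainMat_consCol {α : Type} {k : ℕ} (A : α → Bool) (M : α → Fin k → Bool) :
    ChainMat (consCol α k (A, M)) ↔ ∀ i i', ((A i = true → A i' = true) ∧ M i ≤ M i') ∨
      ((A i' = true → A i = true) ∧ M i' ≤ M i) := by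
  simp only [ChainMat, consCol, Equiv.coe_fn_mk, cons_le_cons_bool]

lemma chainMat_upSet {α : Type} {k : ℕ} {J : α → Bool} {M : α → Fin k → Bool}
    (hM : ChainMat M) : ChainMat (consCol α k (upSet M J, M)) := by
  rw [chainMat_consCol]
  have key : ∀ i i', M i < M i' → upSet M J i = true → upSet M J i' = true := by
    intro i i' hlt hi
    rw [upSet_iff] at hi ⊢
    rcases hi with hi | ⟨i₀, h₀, hlt₀⟩
    · exact Or.inr ⟨i, hi, hlt⟩
    · exact Or.inr ⟨i₀, h₀, hlt₀.trans hlt⟩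
  intro i i'
  by_cases heq : M i = M i'
  · rw [heq]
    by_cases hi : upSet M J i = true
    · exact Or.inr ⟨fun _ => hi, le_rfl⟩
    · exact Or.inl ⟨fun h => absurd h hi, le_rfl⟩
  · rcases hM i i' with h | h
    · exact Or.inl ⟨key _ _ (lt_of_le_of_ne h heq), h⟩
    · exact Or.inr ⟨key _ _ (lt_of_le_of_ne h (Ne.symm heq)), h⟩

lemma lowSet_upSet {α : Type} {k : ℕ} {J : α → Bool} {M : α → Fin k → Bool}
    (hJ : ConstOn J M) : lowSet M (upSet M J) = J := by
  funext i
  rw [Bool.eq_iff_iff, lowSet_iff]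
  simp only [upSet_iff]
  constructor
  · rintro ⟨hi | ⟨i₀, h₀, hlt⟩, hmin⟩
    · exact hi
    · exact absurd (hmin i₀ (Or.inl h₀)) hlt.not_ge
  · refine fun hi => ⟨Or.inl hi, ?_⟩
    rintro i' (hi' | ⟨i₀, h₀, hlt⟩)
    · exact (hJ i i' hi hi').le
    · exact (hJ i i₀ hi h₀).trans_le hlt.le

lemma upSet_lowSet {α : Type} [Finite α] {k : ℕ} {A : α → Bool} {M : α → Fin k → Bool}
    (h : ChainMat (consCol α k (A, M))) : upSet M (lowSet M A) = A := by
  rw [chainMat_consCol] at h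
  funext i
  rw [Bool.eq_iff_iff, upSet_iff]
  constructor
  · rintro (hi | ⟨i₀, h₀, hlt⟩)
    · exact ((lowSet_iff _ _ _).1 hi).1
    · rcases h i₀ i with h' | h'
      · exact h'.1 ((lowSet_iff _ _ _).1 h₀).1
      · exact absurd h'.2 hlt.not_ge
  · intro hi
    -- a minimal row in `A` is a least one, since the rows form a chain
    obtain ⟨i₀, h₀, hmin⟩ := Set.Finite.exists_minimalFor M {i | A i = true}
      (Set.toFinite _) ⟨i, hi⟩
    have hle : ∀ i', A i' = true → M i₀ ≤ M i' := by
      intro i' hi'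
      rcases h i₀ i' with h' | h'
      · exact h'.2
      · exact hmin hi' h'.2
    have hlow : lowSet M A i₀ = true := (lowSet_iff _ _ _).2 ⟨h₀, hle⟩
    by_cases heq : M i₀ = M i
    · exact Or.inl ((lowSet_iff _ _ _).2 ⟨hi, fun i' hi' => heq ▸ hle i' hi'⟩)
    · exact Or.inr ⟨i₀, hlow, lt_of_le_of_ne (hle i hi) heq⟩

/-- The recursion for chain matrices: the first column `A` is encoded by its set `J` of least rows,
which can be any set of equal rows of the remaining matrix. -/
noncomputable def chainSplit (α : Type) [Finite α] (k : ℕ) :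
    {M : α → Fin (k + 1) → Bool // ChainMat M} ≃
      {p : (α → Bool) × (α → Fin k → Bool) // ChainMat p.2 ∧ ConstOn p.1 p.2} where
  toFun M := ⟨(lowSet ((consCol α k).symm M.1).2 ((consCol α k).symm M.1).1,
      ((consCol α k).symm M.1).2), by
    obtain ⟨M, hM⟩ := M
    obtain ⟨⟨A, M⟩, rfl⟩ := (consCol α k).surjective M
    rw [chainMat_consCol] at hM
    simp only [Equiv.symm_apply_apply]
    refine ⟨fun i i' => (hM i i').imp And.right And.right, fun i i' hi hi' => ?_⟩
    rw [lowSet_iff] at hi hi'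
    exact le_antisymm (hi.2 _ hi'.1) (hi'.2 _ hi.1)⟩
  invFun p := ⟨consCol α k (upSet p.1.2 p.1.1, p.1.2), chainMat_upSet p.2.1⟩
  left_inv := by
    rintro ⟨M, hM⟩
    obtain ⟨⟨A, M⟩, rfl⟩ := (consCol α k).surjective M
    simp [upSet_lowSet hM]
  right_inv := by
    rintro ⟨⟨J, M⟩, hM, hJ⟩
    simp [lowSet_upSet hJ]

lemma gFree_consCol {α : Type} [LinearOrder α] {k : ℕ} (J : α → Bool) (M : α → Fin k → Bool) :
    GFree (consCol α k (J, M)) ↔ GFree M ∧ ∀ i, NonLast J i → ∀ j, M i j = false := by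
  constructor
  · intro h
    refine ⟨fun i i' j j' hi hj h1 h2 h3 =>
      h i i' j.succ j'.succ hi (by simpa using hj) (by simpa [consCol] using h1)
        (by simpa [consCol] using h2) (by simpa [consCol] using h3), ?_⟩
    rintro i ⟨hi, i', hi', hlt⟩ j
    by_contra hj
    exact h i i' 0 j.succ hlt (Fin.succ_pos j) (by simpa [consCol] using hi)
      (by simpa [consCol] using hj) (by simpa [consCol] using hi')
  · rintro ⟨h, h0⟩ i i' j j' hi hj h1 h2 h3
    obtain ⟨j', rfl⟩ := Fin.exists_succ_eq.2 (Fin.ne_zero_of_lt hj)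
    rcases Fin.eq_zero_or_eq_succ j with rfl | ⟨j, rfl⟩
    · simp only [consCol, Equiv.coe_fn_mk, Fin.cons_zero, Fin.cons_succ] at h1 h2 h3
      rw [h0 i ⟨h1, i', h3, hi⟩ j'] at h2
      exact absurd h2 (by simp)
    · simp only [consCol, Equiv.coe_fn_mk, Fin.cons_succ] at h1 h2 h3
      exact h i i' j j' hi (by simpa using hj) h1 h2 h3

/-- The recursion for Γ-free matrices. -/
def gammaSplit (α : Type) [LinearOrder α] (k : ℕ) :
    {M : α → Fin (k + 1) → Bool // GFree M} ≃
      {p : (α → Bool) × (α → Fin k → Bool) //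
        GFree p.2 ∧ ∀ i, NonLast p.1 i → ∀ j, p.2 i j = false} :=
  ((consCol α k).subtypeEquiv fun p => (gFree_consCol p.1 p.2).symm).symm

/-! ### Deleting redundant rows -/

/-- Every row in `J` can be replaced by the last row of `J`. -/
lemma exists_retract {α : Type} [LinearOrder α] [Finite α] (J : α → Bool) :
    ∃ r : α → {i // ¬ NonLast J i}, (∀ b : {i // ¬ NonLast J i}, r b = b) ∧
      ∀ i, J i = true → J (r i) = true ∧ ∀ i', J i' = true → r i = r i' := by
  have key : ∀ i, ∃ b : {i // ¬ NonLast J i}, (¬ NonLast J i → b = i) ∧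
      (J i = true → J b = true) := by
    intro i
    by_cases hi : NonLast J i
    · obtain ⟨m, hm, hmax⟩ := Set.Finite.exists_maximalFor id {i | J i = true}
        (Set.toFinite _) ⟨i, hi.1⟩
      refine ⟨⟨m, ?_⟩, fun h => absurd hi h, fun _ => hm⟩
      rintro ⟨-, i', hi', hlt⟩
      exact absurd (hmax hi' hlt.le) hlt.not_ge
    · exact ⟨⟨i, hi⟩, fun _ => rfl, id⟩
  choose r hr hJ using key
  refine ⟨r, fun b => Subtype.ext (hr b b.2), fun i hi => ⟨hJ i hi, fun i' hi' => ?_⟩⟩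
  -- both values lie in `J` and neither of them is exceeded by an element of `J`
  apply Subtype.ext
  rcases lt_trichotomy (r i : α) (r i') with h | h | h
  · exact absurd ⟨hJ i hi, _, hJ i' hi', h⟩ (r i).2
  · exact h
  · exact absurd ⟨hJ i' hi', _, hJ i hi, h⟩ (r i').2

/-- Equal rows in `J` can be merged into the last one. -/
noncomputable def chainDrop (α : Type) [LinearOrder α] [Finite α] (k : ℕ) (J : α → Bool) :
    {M : α → Fin k → Bool // ChainMat M ∧ ConstOn J M} ≃
      {N : {i // ¬ NonLast J i} → Fin k → Bool // ChainMat N} where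
  toFun M := ⟨fun b => M.1 b, fun i i' => M.2.1 i i'⟩
  invFun N := ⟨fun i => N.1 ((exists_retract J).choose i), fun i i' => N.2 _ _, fun i i' hi hi' =>
    congrArg N.1 (((exists_retract J).choose_spec.2 i hi).2 i' hi')⟩
  left_inv := by
    rintro ⟨M, hM, hJ⟩
    apply Subtype.ext
    funext i
    have hr := (exists_retract J).choose_spec
    by_cases hi : NonLast J i
    · exact hJ _ _ (hr.2 i hi.1).1 hi.1
    · exact congrArg (fun b : {i // ¬ NonLast J i} => M b) (hr.1 ⟨i, hi⟩)
  right_inv := by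
    rintro ⟨N, hN⟩
    apply Subtype.ext
    funext b
    exact congrArg N ((exists_retract J).choose_spec.1 b)

open Classical in
/-- Zero rows of a Γ-free matrix can be deleted. -/
noncomputable def gammaDrop (α : Type) [LinearOrder α] (k : ℕ) (J : α → Bool) :
    {M : α → Fin k → Bool // GFree M ∧ ∀ i, NonLast J i → ∀ j, M i j = false} ≃
      {N : {i // ¬ NonLast J i} → Fin k → Bool // GFree N} where
  toFun M := ⟨fun b => M.1 b, fun i i' j j' hi hj => M.2.1 i i' j j' hi hj⟩
  invFun N := ⟨fun i j => if h : NonLast J i then false else N.1 ⟨i, h⟩ j, by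
    refine ⟨fun i i' j j' hi hj h1 h2 h3 => ?_, fun i hi j => by simp [hi]⟩
    by_cases a : NonLast J i
    · simp [a] at h1
    by_cases a' : NonLast J i'
    · simp [a'] at h3
    simp only [a, a', dite_false] at h1 h2 h3
    exact N.2 ⟨i, a⟩ ⟨i', a'⟩ j j' hi hj h1 h2 h3⟩
  left_inv := by
    rintro ⟨M, hM, hJ⟩
    apply Subtype.ext
    funext i j
    by_cases hi : NonLast J i
    · simp [hi, hJ i hi j]
    · simp [hi]
  right_inv := by
    rintro ⟨N, hN⟩
    apply Subtype.ext
    funext b j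
    simp [b.2]

/-! ### The bijection -/

/-- The row index varies in the induction, since both recursions pass to a subset of the rows. -/
theorem chain_equiv_gamma (k : ℕ) : ∀ (α : Type) [LinearOrder α] [Finite α],
    Nonempty ({M : α → Fin k → Bool // ChainMat M} ≃ {M : α → Fin k → Bool // GFree M}) := by
  induction k with
  | zero =>
    intro α _ _
    exact ⟨Equiv.subtypeEquivRight fun M =>
      ⟨fun _ _ _ j => j.elim0, fun _ _ _ => Or.inl fun j => j.elim0⟩⟩
  | succ k ih =>
    intro α _ _
    have e : ∀ J : α → Bool, Nonempty ({M : α → Fin k → Bool // ChainMat M ∧ ConstOn J M} ≃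
        {M : α → Fin k → Bool // GFree M ∧ ∀ i, NonLast J i → ∀ j, M i j = false}) := by
      intro J
      obtain ⟨f⟩ := ih {i // ¬ NonLast J i}
      exact ⟨(chainDrop α k J).trans (f.trans (gammaDrop α k J).symm)⟩
    exact ⟨(chainSplit α k).trans <|
      (Equiv.subtypeProdEquivSigmaSubtype
        fun (J : α → Bool) (M : α → Fin k → Bool) => ChainMat M ∧ ConstOn J M).trans <|
      (Equiv.sigmaCongrRight fun J => (e J).some).trans <|
      (Equiv.subtypeProdEquivSigmaSubtype fun (J : α → Bool) (M : α → Fin k → Bool) =>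
        GFree M ∧ ∀ i, NonLast J i → ∀ j, M i j = false).symm.trans (gammaSplit α k).symm⟩

lemma gammaFree_iff_gFree {n k : ℕ} (M : Fin n → Fin k → Bool) : GammaFree M ↔ GFree M :=
  ⟨fun h i i' j j' hi hj h1 h2 h3 => h ⟨i, i', j, j', hi, hj, h1, h2, h3⟩,
    fun h ⟨i, i', j, j', hi, hj, h1, h2, h3⟩ => h i i' j j' hi hj h1 h2 h3⟩

/-- The set of lonesum matrices of size n×k and the set of Γ-free matrices of size n×k
have the same cardinality. -/
theorem card_lonesum_eq_card_gammaFree (n k : ℕ) :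
    Nat.card {M : Fin n → Fin k → Bool // Lonesum M} =
      Nat.card {M : Fin n → Fin k → Bool // GammaFree M} := by
  obtain ⟨f⟩ := chain_equiv_gamma k (Fin n)
  exact Nat.card_congr ((Equiv.subtypeEquivRight lonesum_iff_chainMat).trans
    (f.trans (Equiv.subtypeEquivRight gammaFree_iff_gFree).symm))
end

section
/- For natural numbers n, k ≥ 1, every Γ-free 0-1 matrix of size n×k contains at most n + k − 1 entries equal to 1; that is, if M : Fin n → Fin k → Bool is Γ-free, then the number of pairs (i,j) with M i j = true is at most n + k − 1. -/
/-- For n, k ≥ 1, a Γ-free 0-1 matrix of size n×k has at most n + k − 1 entries equal to 1. -/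
theorem gammaFree_ones_le (n k : ℕ) (hn : 1 ≤ n) (hk : 1 ≤ k)
    (M : Fin n → Fin k → Bool) (hM : GammaFree M) :
    (Finset.univ.filter fun p : Fin n × Fin k => M p.1 p.2 = true).card ≤ n + k - 1 := by
  classical
  let f : Fin n × Fin k → Fin n ⊕ Fin k := fun p =>
    if ∃ j', p.2 < j' ∧ M p.1 j' = true then Sum.inr p.2 else Sum.inl p.1
  let last : Fin k := ⟨k - 1, by omega⟩
  have hcard : (Finset.univ.erase (Sum.inr last : Fin n ⊕ Fin k)).card = n + k - 1 := by
    simp [Finset.card_erase_of_mem]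
  rw [← hcard]
  apply Finset.card_le_card_of_injOn f
  · rintro ⟨i, j⟩ -
    simp only [Finset.coe_erase, Finset.coe_univ, Set.mem_diff, Set.mem_univ, true_and,
      Set.mem_singleton_iff, f]
    split_ifs with h
    · obtain ⟨j', hj, -⟩ := h
      intro he
      have hjl : j = last := Sum.inr.inj he
      have hj_val : j.val < j'.val := hj
      have hl : j.val = k - 1 := congrArg Fin.val hjl
      omega
    · simp
  · rintro ⟨i, j⟩ hp ⟨i', j'⟩ hq he
    have hp1 : M i j = true := by simpa using hp
    have hq1 : M i' j' = true := by simpa using hq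
    simp only [f] at he
    split_ifs at he with h1 h2 h2
    · obtain rfl : j = j' := Sum.inr.inj he
      obtain ⟨a, ha, hMa⟩ := h1
      obtain ⟨b, hb, hMb⟩ := h2
      rcases lt_trichotomy i i' with h | rfl | h
      · exact (hM ⟨i, i', j, a, h, ha, hp1, hMa, hq1⟩).elim
      · rfl
      · exact (hM ⟨i', i, j, b, h, hb, hq1, hMb, hp1⟩).elim
    · obtain rfl : i = i' := Sum.inl.inj he
      rcases lt_trichotomy j j' with h | rfl | h
      · exact (h1 ⟨j', h, hq1⟩).elim
      · rfl
      · exact (h2 ⟨j, h, hp1⟩).elim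
end
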